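/- Assume N ≥ 3 and A_{i,j} = 1 − δ_{i,j} (the complete graph). Let 1 ≤ k ≤ N/2 and let v ∈ E_k. If k = 1 and α ≥ (N−1)/(N−2), then t(v) < 1 and v is linearly unstable. If instead α < (N−1)/(N−2), then v is linearly unstable. -/

import Mathlib

/-!
Write `p i = v i ^ α` and `w i = ∑ j, A i j * p j`. At an equilibrium `p i * w i = v i * H` with
`H > 0`, so `∂ⱼ H` does not depend on `j` and drops out on the hyperplane `∑ x i = 0`, where
`DF(v) x` has coordinates `(α - 1) x i + α p i ∑ j, A i j x j / w j`
(`isLinUnstable_of_real_eigenvector`).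

Let the first `k` coordinates be `a` and the last `m = N - k` be `b`, and put `u = log (b / a)`,
`s = (b / a) ^ α = exp (α u)`. Equating the two block equations gives `blockLog α k m u = 0`, where
`blockLog α k m u = (α - 1) u + log (k + (m - 1) s) - log (k - 1 + m s)`.
The derivative of `blockLog` at `u` is a positive multiple of the convex quadratic polynomial
`blockPoly`, evaluated at `s`, and equals the eigenvalue of `DF(v)` along the vector equal to `m`
on the first block and `-k` on the second. Since `blockLog` also vanishes at `0`, Rolle's theorem
provides a zero of `blockPoly` strictly between `1` and `s` (`exists_blockPoly_zero`).

If `α < (N - 1) / (N - 2)` then `blockPoly` is negative at `1`, so by convexity it is positive at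
`s`, and this eigenvalue is positive. If `k = 1` and `α ≥ (N - 1) / (N - 2)`, then `blockPoly` has
no zero beyond `1`, so `s < 1`, and the eigenvalue `α - 1 - α s / (1 + (m - 1) s)` along a
difference of two basis vectors of the second block is positive.
-/

open Filter Set Matrix

noncomputable def Hfun {N : ℕ} (A : Matrix (Fin N) (Fin N) ℝ) (α : ℝ)
    (v : Fin N → ℝ) : ℝ :=
  ∑ i, ∑ j, A i j * v i ^ α * v j ^ α

noncomputable def piFun {N : ℕ} (A : Matrix (Fin N) (Fin N) ℝ) (α : ℝ)
    (v : Fin N → ℝ) : Fin N → ℝ :=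
  fun i => v i ^ α * (∑ j, A i j * v j ^ α) / Hfun A α v

noncomputable def Ffield {N : ℕ} (A : Matrix (Fin N) (Fin N) ℝ) (α : ℝ)
    (v : Fin N → ℝ) : Fin N → ℝ :=
  fun i => piFun A α v i - v i

def simplexD {N : ℕ} (A : Matrix (Fin N) (Fin N) ℝ) : Set (Fin N → ℝ) :=
  {v | (∀ i, 0 ≤ v i) ∧ (∑ i, v i = 1) ∧ ∀ i, A i i = 0 → v i ≤ 3 / 4}

/-- The Jacobian matrix of `F` at `v` (matrix of partial derivatives `∂_j F_i (v)`). -/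
noncomputable def DFmat {N : ℕ} (A : Matrix (Fin N) (Fin N) ℝ) (α : ℝ)
    (v : Fin N → ℝ) : Matrix (Fin N) (Fin N) ℝ :=
  fun i j => lineDeriv ℝ (fun u => Ffield A α u i) v (Pi.single j 1)

/-- `v` is linearly stable: every eigenvalue of `DF(v)`, viewed (after complexification)
as a linear map of `T_0Δ = {x : ∑ x_i = 0}`, has negative real part. -/
def IsLinStable {N : ℕ} (A : Matrix (Fin N) (Fin N) ℝ) (α : ℝ)
    (v : Fin N → ℝ) : Prop :=
  ∀ (lam : ℂ) (x : Fin N → ℂ), x ≠ 0 → (∑ i, x i) = 0 →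
    ((DFmat A α v).map (fun r => (r : ℂ))) *ᵥ x = lam • x → lam.re < 0

/-- `v` is linearly unstable: some eigenvalue of `DF(v)`, viewed (after complexification)
as a linear map of `T_0Δ = {x : ∑ x_i = 0}`, has positive real part. -/
def IsLinUnstable {N : ℕ} (A : Matrix (Fin N) (Fin N) ℝ) (α : ℝ)
    (v : Fin N → ℝ) : Prop :=
  ∃ (lam : ℂ) (x : Fin N → ℂ), x ≠ 0 ∧ (∑ i, x i) = 0 ∧
    ((DFmat A α v).map (fun r => (r : ℂ))) *ᵥ x = lam • x ∧ 0 < lam.re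

/-! ### The differential at an equilibrium -/

/-- Entries of the Jacobian at a positive equilibrium, for symmetric `A`. -/
lemma DFmat_apply {N : ℕ} {α : ℝ} (A : Matrix (Fin N) (Fin N) ℝ)
    (hsymm : ∀ i j, A i j = A j i) (v : Fin N → ℝ) (hpos : ∀ i, 0 < v i)
    (hH : Hfun A α v ≠ 0)
    (heq : ∀ i, v i ^ α * (∑ j, A i j * v j ^ α) = v i * Hfun A α v) (i j : Fin N) :
    DFmat A α v i j = (if i = j then α - 1 else 0)
      + α / Hfun A α v * v i ^ α * (A i j * (v j ^ α / v j)) - 2 * α * v i := by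
  set H := Hfun A α v with hHdef
  have hcoord : ∀ l, HasDerivAt (fun t : ℝ => (v + t • (Pi.single j (1 : ℝ) : Fin N → ℝ)) l)
      (if l = j then 1 else 0) 0 := by
    intro l
    have := ((hasDerivAt_id (0 : ℝ)).mul_const ((Pi.single j (1 : ℝ) : Fin N → ℝ) l)).const_add (v l)
    simpa [Pi.single_apply] using this
  have hpow : ∀ l, HasDerivAt (fun t : ℝ => (v + t • (Pi.single j (1 : ℝ) : Fin N → ℝ)) l ^ α)
      (if l = j then α * (v j ^ α / v j) else 0) 0 := by
    intro l
    have h := (hcoord l).rpow_const (p := α) (Or.inl (by simpa using (hpos l).ne'))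
    refine h.congr_deriv ?_
    by_cases hl : l = j
    · subst hl
      simp [Real.rpow_sub_one (hpos l).ne']
    · simp [hl]
  have hw : ∀ l, HasDerivAt
      (fun t : ℝ => ∑ n, A l n * (v + t • (Pi.single j (1 : ℝ) : Fin N → ℝ)) n ^ α)
      (A l j * (α * (v j ^ α / v j))) 0 := by
    intro l
    have h := HasDerivAt.fun_sum (u := Finset.univ) fun n _ => (hpow n).const_mul (A l n)
    refine h.congr_deriv ?_
    simp
  have hHd : HasDerivAt
      (fun t : ℝ => Hfun A α (v + t • (Pi.single j (1 : ℝ) : Fin N → ℝ)))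
      (2 * α * H) 0 := by
    have h := HasDerivAt.fun_sum (u := Finset.univ) fun l _ => (hpow l).mul (hw l)
    have e : (fun t : ℝ => Hfun A α (v + t • (Pi.single j (1 : ℝ) : Fin N → ℝ))) =
        fun t : ℝ => ∑ l, (v + t • (Pi.single j (1 : ℝ) : Fin N → ℝ)) l ^ α *
          ∑ n, A l n * (v + t • (Pi.single j (1 : ℝ) : Fin N → ℝ)) n ^ α := by
      funext t
      simp only [Hfun, Finset.mul_sum]
      exact Finset.sum_congr rfl fun _ _ => Finset.sum_congr rfl fun _ _ => by ring
    rw [e]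
    refine h.congr_deriv ?_
    have h1 : ∑ l, v l ^ α * (A l j * (α * (v j ^ α / v j))) =
        α * (v j ^ α / v j) * ∑ n, A j n * v n ^ α := by
      rw [Finset.mul_sum]
      exact Finset.sum_congr rfl fun l _ => by rw [hsymm l j]; ring
    have h2 : (v j ^ α / v j) * ∑ n, A j n * v n ^ α = H := by
      rw [div_mul_eq_mul_div, heq j, mul_div_cancel_left₀ _ (hpos j).ne']
    simp only [zero_smul, add_zero, Finset.sum_add_distrib, h1, ite_mul, zero_mul,
      Finset.sum_ite_eq', Finset.mem_univ, if_true]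
    linear_combination (2 * α) * h2
  have hF := ((((hpow i).mul (hw i)).div hHd (by simpa using hH)).sub (hcoord i)).deriv
  have hD : DFmat A α v i j = deriv (fun t : ℝ =>
      Ffield A α (v + t • (Pi.single j (1 : ℝ) : Fin N → ℝ)) i) 0 := rfl
  rw [hD]
  refine Eq.trans hF ?_
  simp only [Pi.mul_apply, zero_smul, add_zero, heq i, ← hHdef]
  by_cases hij : i = j
  · subst hij
    have hvi := (hpos i).ne'
    have h2 : v i ^ α / v i * ∑ n, A i n * v n ^ α = H := by
      rw [div_mul_eq_mul_div, heq i, mul_div_cancel_left₀ _ (hpos i).ne']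
    simp only [if_true]
    rw [mul_assoc α, h2]
    field_simp
    ring
  · simp only [hij, if_false]
    field_simp
    ring

/-- A real eigenvector of `DF(v)` on `∑ x i = 0` with positive eigenvalue witnesses instability.
The eigenvector equation is written with `w i = ∑ j, A i j * v j ^ α`, using
`v j ^ α / v j = H / w j` at an equilibrium. -/
lemma isLinUnstable_of_real_eigenvector {N : ℕ} {α : ℝ} (A : Matrix (Fin N) (Fin N) ℝ)
    (hsymm : ∀ i j, A i j = A j i) (v : Fin N → ℝ) (hpos : ∀ i, 0 < v i)
    (hH : Hfun A α v ≠ 0) (w : Fin N → ℝ) (hw : ∀ i, w i = ∑ j, A i j * v j ^ α)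
    (heq : ∀ i, v i ^ α * w i = v i * Hfun A α v)
    (x : Fin N → ℝ) (hx : x ≠ 0) (hsum : ∑ i, x i = 0) (lam : ℝ) (hlam : 0 < lam)
    (heig : ∀ i, (α - 1) * x i + α * v i ^ α * ∑ j, A i j * (x j / w j) = lam * x i) :
    IsLinUnstable A α v := by
  refine ⟨lam, fun i => (x i : ℂ), ?_, ?_, ?_, by simpa using hlam⟩
  · intro h
    exact hx (funext fun i => by simpa using congrFun h i)
  · show ∑ i, (x i : ℂ) = 0
    exact_mod_cast hsum
  have hw0 : ∀ i, w i ≠ 0 := by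
    intro i h
    have := heq i
    rw [h, mul_zero] at this
    exact mul_ne_zero (hpos i).ne' hH this.symm
  have hreal : ∀ i, ∑ j, DFmat A α v i j * x j = lam * x i := by
    intro i
    rw [← heig i]
    have hterm : ∀ j, DFmat A α v i j * x j = (if i = j then (α - 1) * x j else 0)
        + α * v i ^ α * (A i j * (x j / w j)) - 2 * α * v i * x j := by
      intro j
      rw [DFmat_apply A hsymm v hpos hH (fun i => by rw [← hw i]; exact heq i) i j]
      have hr : v j ^ α / v j = Hfun A α v / w j := by
        rw [div_eq_div_iff (hpos j).ne' (hw0 j), heq j, mul_comm]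
      rw [hr]
      have := hw0 j
      split_ifs <;> field_simp <;> ring
    simp only [hterm, Finset.sum_sub_distrib, Finset.sum_add_distrib, ← Finset.mul_sum, hsum]
    simp
  funext i
  have := hreal i
  simp only [Matrix.mulVec, dotProduct, Matrix.map_apply, Pi.smul_apply, smul_eq_mul]
  exact_mod_cast this

/-! ### The scalar equation for the ratio of the two block values -/

/-- Logarithm of the ratio of the two sides of the block equilibrium equation, as a function of
`u = log (b / a)`; it vanishes at two-block equilibria. -/
noncomputable def blockLog (α k m u : ℝ) : ℝ :=
  (α - 1) * u + Real.log (k + (m - 1) * Real.exp (α * u))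
    - Real.log (k - 1 + m * Real.exp (α * u))

/-- Numerator of the derivative of `blockLog`, as a polynomial in `s = exp (α u)`. -/
def blockPoly (α k m s : ℝ) : ℝ :=
  (α - 1) * ((k - 1 + m * s) * (k + (m - 1) * s)) - α * (k + m - 1) * s

lemma hasDerivAt_blockLog {α k m : ℝ} (hk : 1 ≤ k) (hm : 1 ≤ m) (u : ℝ) :
    HasDerivAt (blockLog α k m) (blockPoly α k m (Real.exp (α * u)) /
      ((k - 1 + m * Real.exp (α * u)) * (k + (m - 1) * Real.exp (α * u)))) u := by
  have hE := Real.exp_pos (α * u)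
  have h1 : 0 < k - 1 + m * Real.exp (α * u) := by
    have : 0 < m * Real.exp (α * u) := by positivity
    linarith
  have h2 : 0 < k + (m - 1) * Real.exp (α * u) := by
    have : 0 ≤ (m - 1) * Real.exp (α * u) := mul_nonneg (by linarith) hE.le
    linarith
  have hexp : HasDerivAt (fun u => Real.exp (α * u)) (Real.exp (α * u) * α) u := by
    simpa using ((hasDerivAt_id u).const_mul α).exp
  have hd := ((((hasDerivAt_id u).const_mul (α - 1)).add
    (((hexp.const_mul (m - 1)).const_add k).log h2.ne')).sub
    (((hexp.const_mul m).const_add (k - 1)).log h1.ne'))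
  refine hd.congr_deriv ?_
  rw [blockPoly]
  field_simp
  ring

/-- Rolle's theorem for `blockLog` between its zeros `0` and `u`, in the variable `s`. -/
lemma exists_blockPoly_zero {α k m u : ℝ} (hα : 0 < α) (hk : 1 ≤ k) (hm : 1 ≤ m) (hu : u ≠ 0)
    (hG : blockLog α k m u = 0) :
    ∃ s, blockPoly α k m s = 0 ∧
      ((1 < s ∧ s < Real.exp (α * u)) ∨ (Real.exp (α * u) < s ∧ s < 1)) := by
  have hcont : Continuous (blockLog α k m) :=
    continuous_iff_continuousAt.2 fun x => (hasDerivAt_blockLog hk hm x).continuousAt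
  have hG0 : blockLog α k m 0 = 0 := by
    have : k + (m - 1) = k - 1 + m := by ring
    simp [blockLog, this]
  have hzero : ∀ c, blockPoly α k m (Real.exp (α * c)) /
      ((k - 1 + m * Real.exp (α * c)) * (k + (m - 1) * Real.exp (α * c))) = 0 →
      blockPoly α k m (Real.exp (α * c)) = 0 := by
    intro c hc
    have hE := Real.exp_pos (α * c)
    have h1 : 0 < k - 1 + m * Real.exp (α * c) := by
      have : 0 < m * Real.exp (α * c) := by positivity
      linarith
    have h2 : 0 < k + (m - 1) * Real.exp (α * c) := by
      have : 0 ≤ (m - 1) * Real.exp (α * c) := mul_nonneg (by linarith) hE.le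
      linarith
    rcases div_eq_zero_iff.1 hc with h | h
    · exact h
    · exact absurd h (mul_pos h1 h2).ne'
  rcases lt_or_gt_of_ne hu with h | h
  · obtain ⟨c, hc, hd⟩ := exists_hasDerivAt_eq_zero h hcont.continuousOn (by rw [hG, hG0])
      fun x _ => hasDerivAt_blockLog hk hm x
    refine ⟨_, hzero c hd, Or.inr ⟨?_, ?_⟩⟩
    · exact Real.exp_lt_exp.2 (mul_lt_mul_of_pos_left hc.1 hα)
    · exact Real.exp_zero ▸ Real.exp_lt_exp.2 (mul_neg_of_pos_of_neg hα hc.2)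
  · obtain ⟨c, hc, hd⟩ := exists_hasDerivAt_eq_zero h hcont.continuousOn (by rw [hG, hG0])
      fun x _ => hasDerivAt_blockLog hk hm x
    refine ⟨_, hzero c hd, Or.inl ⟨?_, ?_⟩⟩
    · exact Real.one_lt_exp_iff.2 (mul_pos hα hc.1)
    · exact Real.exp_lt_exp.2 (mul_lt_mul_of_pos_left hc.2 hα)

/-- `blockPoly` is convex in `s`, so it is positive beyond a zero, as seen from a point where it
is negative. -/
lemma blockPoly_pos {α k m s c : ℝ} (hα : 1 < α) (hm : 1 ≤ m)
    (h1 : blockPoly α k m 1 < 0) (hc : blockPoly α k m c = 0)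
    (hbt : (1 < c ∧ c < s) ∨ (s < c ∧ c < 1)) : 0 < blockPoly α k m s := by
  -- Divided difference identity behind the convexity of a quadratic polynomial.
  have key : (c - 1) * blockPoly α k m s = (s - 1) * blockPoly α k m c
      - (s - c) * blockPoly α k m 1
      + (α - 1) * (m * (m - 1)) * ((c - 1) * (s - c) * (s - 1)) := by
    simp only [blockPoly]; ring
  rw [hc, mul_zero, zero_sub] at key
  have hA : 0 ≤ (α - 1) * (m * (m - 1)) :=
    mul_nonneg (by linarith) (mul_nonneg (by linarith) (by linarith))
  rcases hbt with ⟨h, h'⟩ | ⟨h, h'⟩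
  · have e1 : 0 < -((s - c) * blockPoly α k m 1) := by
      have := mul_pos (sub_pos.2 h') (neg_pos.2 h1)
      linarith
    have e2 : 0 ≤ (c - 1) * (s - c) * (s - 1) :=
      mul_nonneg (mul_nonneg (by linarith) (by linarith)) (by linarith)
    have e3 := mul_nonneg hA e2
    exact pos_of_mul_pos_right (a := c - 1) (by linarith) (by linarith)
  · have e1 : 0 < -((c - s) * blockPoly α k m 1) := by
      have := mul_pos (sub_pos.2 h) (neg_pos.2 h1)
      linarith
    have e2 : 0 ≤ (1 - c) * (c - s) * (1 - s) :=
      mul_nonneg (mul_nonneg (by linarith) (by linarith)) (by linarith)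
    have e3 := mul_nonneg hA e2
    refine pos_of_mul_pos_right (a := 1 - c) ?_ (by linarith)
    linarith

/-- For `k = 1`, `blockPoly` divided by `s` is affine and increasing. -/
lemma blockPoly_one_pos {α m s : ℝ} (hα : 1 < α) (hm : 1 < m)
    (h1 : 0 ≤ blockPoly α 1 m 1) (hs : 1 < s) : 0 < blockPoly α 1 m s := by
  have key : blockPoly α 1 m s = s * (blockPoly α 1 m 1 + (α - 1) * (m * (m - 1)) * (s - 1)) := by
    simp only [blockPoly]; ring
  rw [key]
  have : 0 < (α - 1) * (m * (m - 1)) * (s - 1) :=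
    mul_pos (mul_pos (by linarith) (mul_pos (by linarith) (by linarith))) (by linarith)
  exact mul_pos (by linarith) (by linarith)

/-! ### Two-block sums and the theorem -/

lemma sum_two_blocks {N k : ℕ} (hk : k ≤ N) (c d : ℝ) :
    ∑ i : Fin N, (if (i : ℕ) < k then c else d) = k * c + ((N : ℝ) - k) * d := by
  rw [Fin.sum_univ_eq_sum_range (fun i => if i < k then c else d) N,
    ← Finset.sum_range_add_sum_Ico _ hk,
    Finset.sum_congr rfl (g := fun _ => c) (fun i hi => if_pos (Finset.mem_range.1 hi)),
    Finset.sum_congr rfl (g := fun _ => d)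
      (fun i hi => if_neg (not_lt.2 (Finset.mem_Ico.1 hi).1))]
  simp [Nat.cast_sub hk]

lemma sum_complete {N : ℕ} {A : Matrix (Fin N) (Fin N) ℝ}
    (hA : ∀ i j, A i j = if i = j then 0 else 1) (y : Fin N → ℝ) (i : Fin N) :
    ∑ j, A i j * y j = ∑ j, y j - y i := by
  have : ∀ j, A i j * y j = y j - if i = j then y j else 0 := by
    intro j
    rw [hA]
    split_ifs <;> simp
  simp [this, Finset.sum_sub_distrib]

/-- Complete graph (`A_{ij} = 1 - δ_{ij}`, `N ≥ 3`). Let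
`1 ≤ k ≤ N/2` and `v ∈ E_k` (an equilibrium with positive coordinates, different from
the center, whose first `k` coordinates agree and whose last `N - k` coordinates agree),
with `t(v) = v_N / v_1`. If `k = 1` and `α ≥ (N-1)/(N-2)`, then `t(v) < 1` and `v` is
linearly unstable; if instead `α < (N-1)/(N-2)`, then `v` is linearly unstable. -/
theorem Ek_unstable
    {N : ℕ} (hN : 3 ≤ N) {α : ℝ} (hα : 1 < α)
    (A : Matrix (Fin N) (Fin N) ℝ)
    (hA : ∀ i j, A i j = if i = j then 0 else 1)
    (k : ℕ) (hk1 : 1 ≤ k) (hk2 : 2 * k ≤ N)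
    (v : Fin N → ℝ) (hv : v ∈ simplexD A) (heq : Ffield A α v = 0)
    (hpos : ∀ i, 0 < v i) (hne : v ≠ fun _ => (N : ℝ)⁻¹)
    (hfirst : ∀ i j : Fin N, (i : ℕ) < k → (j : ℕ) < k → v i = v j)
    (hlast : ∀ i j : Fin N, k ≤ (i : ℕ) → k ≤ (j : ℕ) → v i = v j) :
    (k = 1 → ((N : ℝ) - 1) / ((N : ℝ) - 2) ≤ α →
      v ⟨N - 1, by omega⟩ / v ⟨0, by omega⟩ < 1 ∧ IsLinUnstable A α v) ∧
    (α < ((N : ℝ) - 1) / ((N : ℝ) - 2) → IsLinUnstable A α v) := by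
  have hkN : k ≤ N := by omega
  have hNR : (3 : ℝ) ≤ N := by exact_mod_cast hN
  have hkR : (1 : ℝ) ≤ k := by exact_mod_cast hk1
  have hkR2 : 2 * (k : ℝ) ≤ N := by exact_mod_cast hk2
  obtain ⟨m, hm⟩ : ∃ m : ℝ, m = (N : ℝ) - k := ⟨_, rfl⟩
  have hm1 : 1 < m := by linarith
  set i0 : Fin N := ⟨0, by omega⟩ with hi0
  set i1 : Fin N := ⟨N - 1, by omega⟩ with hi1
  obtain ⟨a, ha⟩ : ∃ a, a = v i0 := ⟨_, rfl⟩
  obtain ⟨b, hb⟩ : ∃ b, b = v i1 := ⟨_, rfl⟩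
  have ha0 : 0 < a := ha ▸ hpos i0
  have hb0 : 0 < b := hb ▸ hpos i1
  have hvi : ∀ i : Fin N, v i = if (i : ℕ) < k then a else b := by
    intro i
    split_ifs with h
    · rw [ha]; exact hfirst i i0 h (by simp [hi0]; omega)
    · rw [hb]; exact hlast i i1 (by omega) (by simp [hi1]; omega)
  have hsum1 : k * a + m * b = 1 := by
    have := hv.2.1
    simp only [hvi] at this
    rw [sum_two_blocks hkN, ← hm] at this
    exact this
  have hab : a ≠ b := by
    intro h
    apply hne
    funext i
    have : (N : ℝ) * b = 1 := by rw [← hsum1, h, hm]; ring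
    rw [hvi i, h, ite_self]
    exact eq_inv_of_mul_eq_one_right this
  have hsymm : ∀ i j, A i j = A j i := by
    intro i j
    rw [hA, hA]
    simp only [eq_comm]
  obtain ⟨X, hX⟩ : ∃ X, X = a ^ α := ⟨_, rfl⟩
  obtain ⟨Y, hY⟩ : ∃ Y, Y = b ^ α := ⟨_, rfl⟩
  have hX0 : 0 < X := hX ▸ Real.rpow_pos_of_pos ha0 α
  have hY0 : 0 < Y := hY ▸ Real.rpow_pos_of_pos hb0 α
  have hp : ∀ i : Fin N, v i ^ α = if (i : ℕ) < k then X else Y := by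
    intro i
    rw [hvi i]
    split_ifs <;> simp [hX, hY]
  obtain ⟨W1, hW1⟩ : ∃ W, W = (k - 1) * X + m * Y := ⟨_, rfl⟩
  obtain ⟨W2, hW2⟩ : ∃ W, W = k * X + (m - 1) * Y := ⟨_, rfl⟩
  have hW10 : 0 < W1 := by
    have h1 : 0 ≤ ((k : ℝ) - 1) * X := mul_nonneg (by linarith) hX0.le
    have h2 : 0 < m * Y := mul_pos (by linarith) hY0
    linarith
  have hW20 : 0 < W2 := by
    have h1 : 0 < (k : ℝ) * X := mul_pos (by linarith) hX0
    have h2 : 0 < (m - 1) * Y := mul_pos (by linarith) hY0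
    linarith
  have hw : ∀ i : Fin N, (if (i : ℕ) < k then W1 else W2) = ∑ j, A i j * v j ^ α := by
    intro i
    rw [sum_complete hA]
    simp only [hp]
    rw [sum_two_blocks hkN, ← hm]
    split_ifs
    · rw [hW1]; ring
    · rw [hW2]; ring
  have hH : Hfun A α v ≠ 0 := by
    intro h
    have := congrFun heq i0
    simp only [Ffield, piFun, h, div_zero, Pi.zero_apply] at this
    linarith [hpos i0]
  have hequil : ∀ i : Fin N, v i ^ α * (if (i : ℕ) < k then W1 else W2) = v i * Hfun A α v := by
    intro i
    rw [hw i]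
    have := congrFun heq i
    simp only [Ffield, piFun, Pi.zero_apply] at this
    exact (div_eq_iff hH).1 (sub_eq_zero.1 this)
  have hi0k : (i0 : ℕ) < k := by simp [hi0]; omega
  have hi1k : ¬ (i1 : ℕ) < k := by simp [hi1]; omega
  have hE1 : X * W1 = a * Hfun A α v := by
    have := hequil i0
    rwa [hp, hvi, if_pos hi0k, if_pos hi0k, if_pos hi0k] at this
  have hE2 : Y * W2 = b * Hfun A α v := by
    have := hequil i1
    rwa [hp, hvi, if_neg hi1k, if_neg hi1k, if_neg hi1k] at this
  obtain ⟨u, hu⟩ : ∃ u, u = Real.log (b / a) := ⟨_, rfl⟩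
  have hs : Real.exp (α * u) = Y / X := by
    rw [hY, hX, ← Real.div_rpow hb0.le ha0.le, Real.rpow_def_of_pos (div_pos hb0 ha0), hu,
      mul_comm]
  have hu0 : u ≠ 0 := by
    rw [hu]
    exact Real.log_ne_zero_of_pos_of_ne_one (div_pos hb0 ha0)
      fun h => hab ((div_eq_one_iff_eq ha0.ne').1 h).symm
  have hd1 : (k : ℝ) - 1 + m * (Y / X) = W1 / X := by rw [hW1]; field_simp
  have hd2 : (k : ℝ) + (m - 1) * (Y / X) = W2 / X := by rw [hW2]; field_simp
  have hG : blockLog α k m u = 0 := by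
    have hlog : α * u = Real.log (Y / X) := by rw [← hs, Real.log_exp]
    have hprod : Y / X * (W2 / X) = b / a * (W1 / X) := by
      have : Y * W2 * a = b * (X * W1) := by rw [hE1, hE2]; ring
      field_simp
      linear_combination this
    have hl := congrArg Real.log hprod
    rw [Real.log_mul (by positivity) (by positivity), Real.log_mul (by positivity) (by positivity),
      ← hlog, ← hu] at hl
    rw [blockLog, hs, hd1, hd2]
    linear_combination hl
  obtain ⟨c, hc, hbt⟩ := exists_blockPoly_zero (by linarith) hkR hm1.le hu0 hG
  rw [hs] at hbt
  have hP1 : blockPoly α k m 1 = (N - 1) * (α * (N - 2) - (N - 1)) := by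
    rw [blockPoly, hm]; ring
  have hN2 : (0 : ℝ) < (N : ℝ) - 2 := by linarith
  constructor
  · intro hk hα'
    subst hk
    rw [div_le_iff₀ hN2] at hα'
    have hP1' : 0 ≤ blockPoly α (1 : ℕ) m 1 := by
      rw [hP1]; exact mul_nonneg (by linarith) (by linarith)
    simp only [Nat.cast_one] at *
    have hslt : Y / X < 1 := by
      rcases hbt with ⟨h, _⟩ | ⟨h, h'⟩
      · exact absurd hc (blockPoly_one_pos hα hm1 hP1' h).ne'
      · exact h.trans h'
    constructor
    · rw [← ha, ← hb]
      by_contra hcon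
      have := Real.one_le_rpow (not_lt.1 hcon) (z := α) (by linarith)
      rw [Real.div_rpow hb0.le ha0.le, ← hX, ← hY] at this
      linarith
    · rw [div_lt_one hX0] at hslt
      let j1 : Fin N := ⟨1, by omega⟩
      let j2 : Fin N := ⟨2, by omega⟩
      have hj : j1 ≠ j2 := by simp [j1, j2]
      have hxs : ∑ i, (Pi.single j1 1 - Pi.single j2 1 : Fin N → ℝ) i = 0 := by
        simp [Finset.sum_sub_distrib]
      refine isLinUnstable_of_real_eigenvector A hsymm v hpos hH _ hw hequil
        (Pi.single j1 1 - Pi.single j2 1) ?_ hxs (α - 1 - α * Y / W2) ?_ ?_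
      · intro h
        have := congrFun h j1
        simp [hj] at this
      · have : α * Y < (α - 1) * W2 := by
          rw [hW2]
          -- The difference is `(α - 1) (X - Y) + ((α - 1) m - α) Y`.
          have e1 : 0 < (α - 1) * (X - Y) := mul_pos (by linarith) (by linarith)
          have e2 : 0 ≤ ((α - 1) * m - α) * Y :=
            mul_nonneg (by rw [hm]; linarith) hY0.le
          linarith
        have h3 : α * Y / W2 < α - 1 := (div_lt_iff₀ hW20).2 this
        linarith
      · intro i
        rw [sum_complete hA]
        -- The vector is supported on the second block, where `w = W2`.
        have hdiv : ∀ l : Fin N, (Pi.single j1 1 - Pi.single j2 1 : Fin N → ℝ) l /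
            (if (l : ℕ) < 1 then W1 else W2) =
            (Pi.single j1 1 - Pi.single j2 1 : Fin N → ℝ) l / W2 := by
          intro l
          split_ifs with hl
          · have h1 : l ≠ j1 := fun h => by simp [h, j1] at hl
            have h2 : l ≠ j2 := fun h => by simp [h, j2] at hl
            simp [h1, h2]
          · rfl
        have hpx : v i ^ α * (Pi.single j1 1 - Pi.single j2 1 : Fin N → ℝ) i =
            Y * (Pi.single j1 1 - Pi.single j2 1 : Fin N → ℝ) i := by
          rw [hp]
          split_ifs with hl
          · have h1 : i ≠ j1 := fun h => by simp [h, j1] at hl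
            have h2 : i ≠ j2 := fun h => by simp [h, j2] at hl
            simp [h1, h2]
          · rfl
        simp only [hdiv]
        rw [← Finset.sum_div, hxs, zero_div]
        linear_combination (-(α / W2)) * hpx
  · intro hα'
    rw [lt_div_iff₀ hN2] at hα'
    have hneg : blockPoly α k m 1 < 0 := by
      rw [hP1]; exact mul_neg_of_pos_of_neg (by linarith) (by linarith)
    have hPs := blockPoly_pos hα hm1.le hneg hc hbt
    rw [blockPoly, hd1, hd2] at hPs
    have hxs : ∑ i : Fin N, (if (i : ℕ) < k then m else -(k : ℝ)) = 0 := by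
      rw [sum_two_blocks hkN, ← hm]; ring
    refine isLinUnstable_of_real_eigenvector A hsymm v hpos hH _ hw hequil
      (fun i => if (i : ℕ) < k then m else -(k : ℝ)) ?_ hxs
      (α - 1 - α * (k + m - 1) * X * Y / (W1 * W2)) ?_ ?_
    · intro h
      have := congrFun h i0
      simp only [hi0k, if_true, Pi.zero_apply] at this
      linarith
    · have : α - 1 - α * (k + m - 1) * X * Y / (W1 * W2) =
          ((α - 1) * (W1 / X * (W2 / X)) - α * (k + m - 1) * (Y / X)) * (X * X / (W1 * W2)) := by
        field_simp
      rw [this]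
      exact mul_pos hPs (by positivity)
    · intro i
      rw [sum_complete hA]
      have hdiv : ∀ l : Fin N, (if (l : ℕ) < k then m else -(k : ℝ)) /
          (if (l : ℕ) < k then W1 else W2) =
          if (l : ℕ) < k then m / W1 else -(k : ℝ) / W2 := by
        intro l
        split_ifs <;> rfl
      simp only [hdiv]
      rw [sum_two_blocks hkN, ← hm, hp]
      have hW1n := hW10.ne'
      have hW2n := hW20.ne'
      split_ifs
      · field_simp
        rw [hW1, hW2]; ring
      · field_simp
        rw [hW1, hW2]; ring
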